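/- The 3-dimensional node, i.e., the set of (u,v) in R^4 × R^4 satisfying |u|^2 - |v|^2 = 0 and ⟨u,v⟩ = 0, is homeomorphic to the cone over S^3 × S^2, namely to the quotient of ([0,∞) × S^3 × S^2) obtained by collapsing {0} × S^3 × S^2 to a point. -/

import Mathlib

open scoped RealInnerProductSpace

/-- The topological cone over `X`: the quotient of `[0,∞) × X` collapsing `{0} × X`
to a point. -/
def coneSetoid (X : Type*) : Setoid ({t : ℝ // 0 ≤ t} × X) where
  r a b := a = b ∨ (a.1.1 = 0 ∧ b.1.1 = 0)
  iseqv := by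
    constructor
    · intro a; exact Or.inl rfl
    · intro a b h
      rcases h with h | h
      · exact Or.inl h.symm
      · exact Or.inr ⟨h.2, h.1⟩
    · intro a b c hab hbc
      rcases hab with h | h
      · subst h; exact hbc
      · rcases hbc with h' | h'
        · subst h'; exact Or.inr h
        · exact Or.inr ⟨h.1, h'.2⟩

def TopCone (X : Type*) [TopologicalSpace X] : Type _ := Quotient (coneSetoid X)

instance (X : Type*) [TopologicalSpace X] : TopologicalSpace (TopCone X) :=
  instTopologicalSpaceQuotient

abbrev E4 := EuclideanSpace ℝ (Fin 4)
abbrev E3 := EuclideanSpace ℝ (Fin 3)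
abbrev S3 := Metric.sphere (0 : E4) 1
abbrev S2 := Metric.sphere (0 : E3) 1
abbrev Node := {p : E4 × E4 // ‖p.1‖ ^ 2 - ‖p.2‖ ^ 2 = 0 ∧ ⟪p.1, p.2⟫ = 0}

/-- Left multiplication of the quaternion `u` by the imaginary quaternion `w`. -/
noncomputable def qm (u : E4) (w : E3) : E4 :=
  !₂[-(w 0 * u 1) - w 1 * u 2 - w 2 * u 3,
     w 0 * u 0 + w 1 * u 3 - w 2 * u 2,
     -(w 0 * u 3) + w 1 * u 0 + w 2 * u 1,
     w 0 * u 2 - w 1 * u 1 + w 2 * u 0]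

noncomputable def qinv (u y : E4) : E3 :=
  !₂[-(y 0 * u 1) + y 1 * u 0 - y 2 * u 3 + y 3 * u 2,
     -(y 0 * u 2) + y 1 * u 3 + y 2 * u 0 - y 3 * u 1,
     -(y 0 * u 3) - y 1 * u 2 + y 2 * u 1 + y 3 * u 0]

lemma nsq4 (u : E4) : ‖u‖ ^ 2 = u 0 ^ 2 + u 1 ^ 2 + u 2 ^ 2 + u 3 ^ 2 := by
  rw [EuclideanSpace.real_norm_sq_eq, Fin.sum_univ_four]

lemma nsq3 (u : E3) : ‖u‖ ^ 2 = u 0 ^ 2 + u 1 ^ 2 + u 2 ^ 2 := by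
  rw [EuclideanSpace.real_norm_sq_eq, Fin.sum_univ_three]

lemma inner4 (u v : E4) : ⟪u, v⟫ = u 0 * v 0 + u 1 * v 1 + u 2 * v 2 + u 3 * v 3 := by
  simp [PiLp.inner_apply, Fin.sum_univ_four, mul_comm]

lemma qm_norm (u : E4) (w : E3) : ‖qm u w‖ ^ 2 = ‖u‖ ^ 2 * ‖w‖ ^ 2 := by
  rw [nsq4, nsq4, nsq3]; simp [qm]; ring

lemma qm_inner (u : E4) (w : E3) : ⟪u, qm u w⟫ = 0 := by
  rw [inner4]; simp [qm]; ring

lemma qinv_qm (u : E4) (w : E3) (hu : ‖u‖ ^ 2 = 1) : qinv u (qm u w) = w := by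
  rw [nsq4] at hu
  ext i
  fin_cases i <;> simp [qm, qinv]
  · linear_combination (w 0) * hu
  · linear_combination (w 1) * hu
  · linear_combination (w 2) * hu

lemma qm_qinv (u y : E4) (hu : ‖u‖ ^ 2 = 1) (h : ⟪u, y⟫ = 0) : qm u (qinv u y) = y := by
  rw [nsq4] at hu
  rw [inner4] at h
  ext i
  fin_cases i <;> simp [qm, qinv]
  · linear_combination (y 0) * hu - u 0 * h
  · linear_combination (y 1) * hu - u 1 * h
  · linear_combination (y 2) * hu - u 2 * h
  · linear_combination (y 3) * hu - u 3 * h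

lemma qm_cont : Continuous (fun p : E4 × E3 => qm p.1 p.2) := by
  unfold qm
  apply (PiLp.continuous_toLp 2 _).comp
  refine continuous_pi fun i => ?_
  fin_cases i <;> simp <;> fun_prop

lemma sph_sq {n : ℕ} (u : Metric.sphere (0 : EuclideanSpace ℝ (Fin n)) 1) :
    ‖(u : EuclideanSpace ℝ (Fin n))‖ = 1 := by simp

noncomputable def coneMap (a : {t : ℝ // 0 ≤ t} × (S3 × S2)) : Node :=
  ⟨(a.1.1 • (a.2.1 : E4), a.1.1 • qm a.2.1 a.2.2), by
    constructor
    · simp only [norm_smul, mul_pow, qm_norm, sph_sq]; ring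
    · simp only [inner_smul_left, inner_smul_right, qm_inner]; simp⟩

lemma coneMap_cont : Continuous coneMap := by
  apply Continuous.subtype_mk
  have h : Continuous fun a : {t : ℝ // 0 ≤ t} × (S3 × S2) => qm a.2.1 a.2.2 :=
    qm_cont.comp (f := fun a : {t : ℝ // 0 ≤ t} × (S3 × S2) => ((a.2.1 : E4), (a.2.2 : E3)))
      (by fun_prop)
  fun_prop

lemma coneMap_norm (a) : ‖(coneMap a).1.1‖ = a.1.1 := by
  simp only [coneMap, norm_smul, sph_sq, Real.norm_eq_abs, abs_of_nonneg a.1.2, mul_one]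

lemma coneMap_proper : IsProperMap coneMap := by
  have hg : Continuous (fun p : Node => ‖p.1.1‖) := by fun_prop
  refine isProperMap_of_comp_of_t2 coneMap_cont hg ?_
  have : (fun p : Node => ‖p.1.1‖) ∘ coneMap = Subtype.val ∘ Prod.fst := by
    funext a; exact coneMap_norm a
  rw [this]
  have hc : IsClosed {t : ℝ | 0 ≤ t} := isClosed_Ici
  exact (hc.isClosedEmbedding_subtypeVal.isProperMap).comp isProperMap_fst_of_compactSpace

lemma coneMap_eq_iff (a b) : coneMap a = coneMap b ↔ (coneSetoid (S3 × S2)).r a b := by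
  obtain ⟨⟨t, ht⟩, u, w⟩ := a
  obtain ⟨⟨s, hs⟩, u', w'⟩ := b
  constructor
  · intro h
    have h1 : t = s := by
      have := congrArg (fun p : Node => ‖p.1.1‖) h
      simpa only [coneMap_norm] using this
    subst h1
    by_cases h0 : t = 0
    · exact Or.inr ⟨h0, h0⟩
    · left
      have h2 := congrArg (fun p : Node => p.1.1) h
      have h3 := congrArg (fun p : Node => p.1.2) h
      simp only [coneMap] at h2 h3
      have h2 := smul_right_injective _ h0 h2
      have h3 := smul_right_injective _ h0 h3
      have hu : u = u' := Subtype.ext h2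
      subst hu
      have hw : w = w' := by
        apply Subtype.ext
        rw [← qinv_qm u w (by rw [sph_sq]; norm_num), h3, qinv_qm u w' (by rw [sph_sq]; norm_num)]
      rw [hw]
  · rintro (h | ⟨h, h'⟩)
    · rw [h]
    · simp only at h h'
      subst h h'
      simp [coneMap]

lemma coneMap_surj : Function.Surjective coneMap := by
  rintro ⟨⟨p, q⟩, h1, h2⟩
  simp only at h1 h2
  have hpq : ‖p‖ = ‖q‖ := by
    rw [← sq_eq_sq₀ (norm_nonneg _) (norm_nonneg _)]; linarith
  by_cases h0 : p = 0
  · have hq : q = 0 := by rw [← norm_eq_zero, ← hpq, h0, norm_zero]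
    refine ⟨(⟨0, le_rfl⟩, ⟨EuclideanSpace.single 0 1, by simp⟩,
      ⟨EuclideanSpace.single 0 1, by simp⟩), ?_⟩
    simp [coneMap, h0, hq]
  · have hp : ‖p‖ ≠ 0 := by simpa using h0
    have nu : ‖‖p‖⁻¹ • p‖ = 1 := by rw [norm_smul, norm_inv, norm_norm]; field_simp
    have ny : ‖‖p‖⁻¹ • q‖ = 1 := by rw [norm_smul, norm_inv, norm_norm, ← hpq]; field_simp
    have e := qm_qinv (‖p‖⁻¹ • p) (‖p‖⁻¹ • q) (by rw [nu]; norm_num)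
      (by simp [inner_smul_left, inner_smul_right, h2])
    have nw : ‖qinv (‖p‖⁻¹ • p) (‖p‖⁻¹ • q)‖ = 1 := by
      have := qm_norm (‖p‖⁻¹ • p) (qinv (‖p‖⁻¹ • p) (‖p‖⁻¹ • q))
      rw [e, nu, ny] at this
      rw [← sq_eq_sq₀ (norm_nonneg _) zero_le_one]; linarith
    refine ⟨(⟨‖p‖, norm_nonneg _⟩, ⟨‖p‖⁻¹ • p, by simpa using nu⟩,
      ⟨qinv (‖p‖⁻¹ • p) (‖p‖⁻¹ • q), by simpa using nw⟩), ?_⟩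
    apply Subtype.ext
    simp only [coneMap, e]
    rw [smul_inv_smul₀ hp, smul_inv_smul₀ hp]

noncomputable def coneLift : TopCone (S3 × S2) → Node :=
  Quotient.lift coneMap (fun a b h => (coneMap_eq_iff a b).2 h)

lemma coneLift_homeo : IsHomeomorph coneLift := by
  rw [isHomeomorph_iff_continuous_isClosedMap_bijective]
  have hq : Continuous (Quotient.mk (coneSetoid (S3 × S2)) : _ → TopCone (S3 × S2)) :=
    continuous_quotient_mk'
  refine ⟨Continuous.quotient_lift coneMap_cont _, ?_, ?_, ?_⟩
  · intro C hC
    have := coneMap_proper.isClosedMap _ (hC.preimage hq)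
    convert this using 1
    ext y
    constructor
    · rintro ⟨x, hx, rfl⟩
      obtain ⟨a, rfl⟩ := Quotient.exists_rep x
      exact ⟨a, hx, rfl⟩
    · rintro ⟨a, ha, rfl⟩
      exact ⟨_, ha, rfl⟩
  · intro x y h
    obtain ⟨a, rfl⟩ := Quotient.exists_rep x
    obtain ⟨b, rfl⟩ := Quotient.exists_rep y
    exact Quotient.sound ((coneMap_eq_iff a b).1 h)
  · intro y
    obtain ⟨a, rfl⟩ := coneMap_surj y
    exact ⟨Quotient.mk _ a, rfl⟩

/-- The 3-dimensional node `{(u,v) ∈ ℝ⁴ × ℝ⁴ : |u|² - |v|² = 0, ⟨u,v⟩ = 0}` is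
homeomorphic to the cone over `S³ × S²`. -/
theorem stmt_3 :
    Nonempty
      ({p : EuclideanSpace ℝ (Fin 4) × EuclideanSpace ℝ (Fin 4) //
          ‖p.1‖ ^ 2 - ‖p.2‖ ^ 2 = 0 ∧ ⟪p.1, p.2⟫ = 0} ≃ₜ
        TopCone (Metric.sphere (0 : EuclideanSpace ℝ (Fin 4)) 1 ×
          Metric.sphere (0 : EuclideanSpace ℝ (Fin 3)) 1)) :=
  ⟨(coneLift_homeo.homeomorph).symm⟩
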